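/- For every randomized policy π, the distributionally robust return estimate has the simplified form ρ̃(π) = min_{u∈Ũ(π)} bᵀu/(1−γ), where the minimum is attained because Ũ(π) is a nonempty compact set (it contains u_π). -/

import Mathlib

open Matrix BigOperators

namespace DRADP

variable {S A K : Type*} [Fintype S] [Fintype A] [Fintype K] [DecidableEq S] [DecidableEq A]

/-- A randomized policy: nonnegative with rows summing to one. -/
def isPolicy (π : S → A → ℝ) : Prop :=
  (∀ s a, 0 ≤ π s a) ∧ ∀ s, ∑ a, π s a = 1

/-- The randomized policy corresponding to a deterministic policy `p : S → A`. -/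
def detPol (p : S → A) : S → A → ℝ := fun s a => if a = p s then 1 else 0

/-- Transition matrix `P_π` of a policy. -/
noncomputable def Pmat (P : S → A → S → ℝ) (π : S → A → ℝ) : Matrix S S ℝ :=
  Matrix.of fun s s' => ∑ a, P s a s' * π s a

/-- Reward vector `r_π` of a policy. -/
noncomputable def rvec (r : S → A → ℝ) (π : S → A → ℝ) : S → ℝ :=
  fun s => ∑ a, r s a * π s a

/-- State occupancy frequency `d_π = (1-γ)·∑_t γ^t (P_πᵀ)^t α`. -/
noncomputable def dOcc (P : S → A → S → ℝ) (α : S → ℝ) (γ : ℝ) (π : S → A → ℝ) : S → ℝ :=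
  fun s => (1 - γ) * ∑' t : ℕ, γ ^ t * (((Pmat P π)ᵀ ^ t) *ᵥ α) s

/-- State-action occupancy frequency `u_π(s,a) = d_π(s)·π(s,a)`. -/
noncomputable def uOcc (P : S → A → S → ℝ) (α : S → ℝ) (γ : ℝ) (π : S → A → ℝ) : S × A → ℝ :=
  fun w => dOcc P α γ π w.1 * π w.1 w.2

/-- Value function `v_π = ∑_t γ^t P_π^t r_π`. -/
noncomputable def vVal (P : S → A → S → ℝ) (r : S → A → ℝ) (γ : ℝ) (π : S → A → ℝ) : S → ℝ :=
  fun s => ∑' t : ℕ, γ ^ t * ((Pmat P π ^ t) *ᵥ rvec r π) s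

/-- The return `ρ(π) = αᵀ v_π`. -/
noncomputable def ret (P : S → A → S → ℝ) (r : S → A → ℝ) (α : S → ℝ) (γ : ℝ)
    (π : S → A → ℝ) : ℝ :=
  ∑ s, α s * vVal P r γ π s

/-- The matrix `A` with rows `A((s,a),·) = e_sᵀ − γ·P(s,a,·)`. -/
def Amat (P : S → A → S → ℝ) (γ : ℝ) : Matrix (S × A) S ℝ :=
  Matrix.of fun w s' => (if w.1 = s' then (1 : ℝ) else 0) - γ * P w.1 w.2 s'

/-- The vector `b(s,a) = r(s,a)`. -/
def bvec (r : S → A → ℝ) : S × A → ℝ := fun w => r w.1 w.2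

/-- `U = {u : u ≥ 0, Aᵀu = (1−γ)·α}`. -/
def Uset (P : S → A → S → ℝ) (α : S → ℝ) (γ : ℝ) : Set (S × A → ℝ) :=
  {u | (∀ w, 0 ≤ u w) ∧ (Amat P γ)ᵀ *ᵥ u = fun s => (1 - γ) * α s}

/-- The Bellman operator `L`. -/
noncomputable def bell (P : S → A → S → ℝ) (r : S → A → ℝ) (γ : ℝ) (v : S → ℝ) : S → ℝ :=
  fun s => ⨆ a : A, (r s a + γ * ∑ s', P s a s' * v s')

/-- A deterministic policy `p` is greedy w.r.t. `v`. -/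
def isGreedy (P : S → A → S → ℝ) (r : S → A → ℝ) (γ : ℝ) (p : S → A) (v : S → ℝ) : Prop :=
  ∀ s a, r s a + γ * ∑ s', P s a s' * v s' ≤ r s (p s) + γ * ∑ s', P s (p s) s' * v s'

/-- Approximate occupancy frequencies `Ũ(π)`. -/
def Utilde (P : S → A → S → ℝ) (α : S → ℝ) (γ : ℝ) (Φ : Matrix S K ℝ) (π : S → A → ℝ) :
    Set (S × A → ℝ) :=
  {u | (∀ w, 0 ≤ u w) ∧
    (Φᵀ *ᵥ ((Amat P γ)ᵀ *ᵥ u) = fun j => (1 - γ) * (Φᵀ *ᵥ α) j) ∧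
    ∀ w, u w ≤ π w.1 w.2}

/-- The distributionally robust return estimate
`ρ̃(π) = sup_{v∈Ṽ} (αᵀv − sup_{u∈Ũ(π)} uᵀ(Av − b)/(1−γ))`. -/
noncomputable def rhoTilde (P : S → A → S → ℝ) (r : S → A → ℝ) (α : S → ℝ) (γ : ℝ)
    (Φ : Matrix S K ℝ) (π : S → A → ℝ) : ℝ :=
  ⨆ x : K → ℝ, (∑ s, α s * (Φ *ᵥ x) s -
    sSup ((fun u : S × A → ℝ =>
      (∑ w, u w * ((Amat P γ *ᵥ (Φ *ᵥ x)) w - bvec r w)) / (1 - γ)) ''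
      Utilde P α γ Φ π))

/-- The set `G` of deterministic policies greedy w.r.t. some representable value function. -/
def greedySet (P : S → A → S → ℝ) (r : S → A → ℝ) (γ : ℝ) (Φ : Matrix S K ℝ) :
    Set (S → A → ℝ) :=
  {π | ∃ p : S → A, π = detPol p ∧ ∃ x : K → ℝ, isGreedy P r γ p (Φ *ᵥ x)}

end DRADP

open DRADP

/-! For `u ∈ Ũ(π)` the constraint `ΦᵀAᵀu = (1−γ)Φᵀα` gives `uᵀAv = (1−γ)αᵀv` for every
representable `v`, so the objective in `ρ̃(π)` does not depend on `v` and equals the minimum of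
`bᵀu/(1−γ)` over the compact set `Ũ(π)`. This set is nonempty because it contains `u_π`: the matrix
`(1−γ)·∑_t γ^t P_π^t` is row stochastic and inverts `I − γP_π` up to the factor `1−γ`, so `d_π` is
a probability vector satisfying the Bellman flow equation. -/

namespace DRADP

theorem sub_sSup_image_const_sub {ι R : Type*} [ConditionallyCompleteLattice R] [AddCommGroup R]
    [IsOrderedAddMonoid R] {f : ι → R} {s : Set ι} {m : R} (hm : IsLeast (f '' s) m) (c : R) :
    c - sSup ((fun i => c - f i) '' s) = m := by
  have hanti : Antitone fun a : R => c - a := fun _ _ h => sub_le_sub_left h c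
  have hgreatest : IsGreatest ((fun i => c - f i) '' s) (c - m) := by
    simpa only [Set.image_image] using hanti.map_isLeast hm
  rw [hgreatest.csSup_eq, sub_sub_cancel]

theorem vecMul_mem_stdSimplex {R n : Type*} [Fintype n] [DecidableEq n] [Semiring R]
    [PartialOrder R] [IsOrderedRing R] {M : Matrix n n R} {x : n → R} (hx : x ∈ stdSimplex R n)
    (hM : M ∈ rowStochastic R n) : x ᵥ* M ∈ stdSimplex R n := by
  refine ⟨nonneg_vecMul_of_mem_rowStochastic hM hx.1, ?_⟩
  rw [← dotProduct_one]
  exact vecMul_dotProduct_one_eq_one_rowStochastic hM ((dotProduct_one x).trans hx.2)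

section OccupancyMatrix

variable {n : Type*} [Fintype n] [DecidableEq n] {M : Matrix n n ℝ} {γ : ℝ}

/-- The normalized discounted resolvent `(1−γ)·∑_t γ^t M^t` of a transition matrix `M`; its
`(i, j)` entry is the discounted frequency of visits to `j` of the chain started at `i`. -/
noncomputable def occupancyMatrix (M : Matrix n n ℝ) (γ : ℝ) : Matrix n n ℝ :=
  (1 - γ) • ∑' t : ℕ, (γ • M) ^ t

theorem summable_smul_pow_of_mem_rowStochastic (hM : M ∈ rowStochastic ℝ n) (hγ : |γ| < 1) :
    Summable fun t : ℕ => (γ • M) ^ t := by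
  refine Pi.summable.2 fun i => Pi.summable.2 fun j =>
    (summable_geometric_of_lt_one (abs_nonneg γ) hγ).of_norm_bounded fun t => ?_
  have hMt : M ^ t ∈ rowStochastic ℝ n := pow_mem hM t
  rw [smul_pow, Matrix.smul_apply, smul_eq_mul, norm_mul, norm_pow, Real.norm_eq_abs,
    Real.norm_of_nonneg (nonneg_of_mem_rowStochastic hMt)]
  exact mul_le_of_le_one_right (by positivity) (le_one_of_mem_rowStochastic hMt)

theorem occupancyMatrix_mul_one_sub (hM : M ∈ rowStochastic ℝ n) (hγ : |γ| < 1) :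
    occupancyMatrix M γ * (1 - γ • M) = (1 - γ) • 1 := by
  rw [occupancyMatrix, smul_mul_assoc,
    (summable_smul_pow_of_mem_rowStochastic hM hγ).tsum_pow_mul_one_sub]

theorem hasSum_occupancyMatrix_apply (hM : M ∈ rowStochastic ℝ n) (hγ : |γ| < 1) (i j : n) :
    HasSum (fun t : ℕ => (1 - γ) * (γ ^ t * (M ^ t) i j)) (occupancyMatrix M γ i j) := by
  have hentry := Pi.hasSum.1 (Pi.hasSum.1
    (summable_smul_pow_of_mem_rowStochastic hM hγ).hasSum i) j
  simpa only [occupancyMatrix, smul_pow, Matrix.smul_apply, smul_eq_mul] using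
    hentry.mul_left (1 - γ)

theorem occupancyMatrix_mem_rowStochastic (hM : M ∈ rowStochastic ℝ n) (hγ0 : 0 ≤ γ)
    (hγ1 : γ < 1) : occupancyMatrix M γ ∈ rowStochastic ℝ n := by
  have hγ : |γ| < 1 := by rwa [abs_of_nonneg hγ0]
  have hγ' : 0 < 1 - γ := sub_pos.2 hγ1
  refine ⟨fun i j => (hasSum_occupancyMatrix_apply hM hγ i j).nonneg fun t => ?_, ?_⟩
  · have hMt : 0 ≤ (M ^ t) i j := nonneg_of_mem_rowStochastic (pow_mem hM t)
    positivity
  · have hone : (1 - γ • M) *ᵥ 1 = (1 - γ) • (1 : n → ℝ) := by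
      rw [sub_mulVec, one_mulVec, smul_mulVec, hM.2, sub_smul, one_smul]
    refine smul_right_injective _ hγ'.ne' ?_
    calc (1 - γ) • occupancyMatrix M γ *ᵥ 1
        = (occupancyMatrix M γ * (1 - γ • M)) *ᵥ 1 := by
          rw [← mulVec_mulVec, hone, mulVec_smul]
      _ = (1 - γ) • 1 := by
          rw [occupancyMatrix_mul_one_sub hM hγ, smul_mulVec, one_mulVec]

end OccupancyMatrix

section Occupancy

variable {S A : Type*} [Fintype S] [Fintype A] [DecidableEq S]
  {P : S → A → S → ℝ} {α : S → ℝ} {γ : ℝ} {π : S → A → ℝ}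

theorem Pmat_mem_rowStochastic (hP : ∀ s a s', 0 ≤ P s a s')
    (hPsum : ∀ s a, ∑ s', P s a s' = 1) (hπ : isPolicy π) : Pmat P π ∈ rowStochastic ℝ S := by
  refine mem_rowStochastic_iff_sum.2 ⟨fun s s' =>
    Finset.sum_nonneg fun a _ => mul_nonneg (hP s a s') (hπ.1 s a), fun s => ?_⟩
  simp only [Pmat, of_apply]
  rw [Finset.sum_comm]
  simp only [← Finset.sum_mul, hPsum, one_mul, hπ.2]

theorem dOcc_eq_vecMul_occupancyMatrix (hM : Pmat P π ∈ rowStochastic ℝ S) (hγ : |γ| < 1) :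
    dOcc P α γ π = α ᵥ* occupancyMatrix (Pmat P π) γ := by
  ext s
  have hterm (t : ℕ) : (1 - γ) * (γ ^ t * (((Pmat P π)ᵀ ^ t) *ᵥ α) s) =
      ∑ i, α i * ((1 - γ) * (γ ^ t * (Pmat P π ^ t) i s)) := by
    rw [← transpose_pow, mulVec_transpose]
    simp only [vecMul, dotProduct, Finset.mul_sum]
    exact Finset.sum_congr rfl fun i _ => by ring
  simp only [dOcc, ← tsum_mul_left, hterm]
  exact (hasSum_sum fun i _ => (hasSum_occupancyMatrix_apply hM hγ i s).mul_left (α i)).tsum_eq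

theorem dOcc_mem_stdSimplex (hM : Pmat P π ∈ rowStochastic ℝ S) (hα : α ∈ stdSimplex ℝ S)
    (hγ0 : 0 ≤ γ) (hγ1 : γ < 1) : dOcc P α γ π ∈ stdSimplex ℝ S := by
  rw [dOcc_eq_vecMul_occupancyMatrix hM (by rwa [abs_of_nonneg hγ0])]
  exact vecMul_mem_stdSimplex hα (occupancyMatrix_mem_rowStochastic hM hγ0 hγ1)

theorem dOcc_vecMul_one_sub_Pmat (hM : Pmat P π ∈ rowStochastic ℝ S) (hγ : |γ| < 1) :
    dOcc P α γ π ᵥ* (1 - γ • Pmat P π) = (1 - γ) • α := by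
  rw [dOcc_eq_vecMul_occupancyMatrix hM hγ, vecMul_vecMul, occupancyMatrix_mul_one_sub hM hγ,
    vecMul_smul, vecMul_one]

theorem transpose_Amat_mulVec_mul_policy (hπ : ∀ s, ∑ a, π s a = 1) (d : S → ℝ) :
    (Amat P γ)ᵀ *ᵥ (fun w => d w.1 * π w.1 w.2) = d ᵥ* (1 - γ • Pmat P π) := by
  ext s'
  simp only [mulVec, vecMul, dotProduct, transpose_apply, Amat, Pmat, of_apply,
    Matrix.sub_apply, Matrix.smul_apply, smul_eq_mul, one_apply, Fintype.sum_prod_type]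
  refine Finset.sum_congr rfl fun s _ => ?_
  calc ∑ a, ((if s = s' then 1 else 0) - γ * P s a s') * (d s * π s a)
      = d s * ((if s = s' then 1 else 0) * ∑ a, π s a - γ * ∑ a, P s a s' * π s a) := by
        simp only [Finset.mul_sum, ← Finset.sum_sub_distrib]
        exact Finset.sum_congr rfl fun a _ => by ring
    _ = d s * ((if s = s' then 1 else 0) - γ * ∑ a, P s a s' * π s a) := by
        rw [hπ, mul_one]

theorem uOcc_mem_Uset (hP : ∀ s a s', 0 ≤ P s a s') (hPsum : ∀ s a, ∑ s', P s a s' = 1)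
    (hα : α ∈ stdSimplex ℝ S) (hγ0 : 0 ≤ γ) (hγ1 : γ < 1) (hπ : isPolicy π) :
    uOcc P α γ π ∈ Uset P α γ := by
  have hM := Pmat_mem_rowStochastic hP hPsum hπ
  refine ⟨fun w => mul_nonneg ((dOcc_mem_stdSimplex hM hα hγ0 hγ1).1 _) (hπ.1 _ _), ?_⟩
  exact (transpose_Amat_mulVec_mul_policy hπ.2 _).trans
    (dOcc_vecMul_one_sub_Pmat hM (by rwa [abs_of_nonneg hγ0]))

theorem uOcc_le_policy (hM : Pmat P π ∈ rowStochastic ℝ S) (hα : α ∈ stdSimplex ℝ S)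
    (hγ0 : 0 ≤ γ) (hγ1 : γ < 1) (hπ : ∀ s a, 0 ≤ π s a) (w : S × A) :
    uOcc P α γ π w ≤ π w.1 w.2 :=
  mul_le_of_le_one_left (hπ _ _)
    (mem_Icc_of_mem_stdSimplex (dOcc_mem_stdSimplex hM hα hγ0 hγ1) w.1).2

end Occupancy

section Utilde

variable {S A K : Type*} [Fintype S] [Fintype A] [DecidableEq S]
  {P : S → A → S → ℝ} {α : S → ℝ} {γ : ℝ} {Φ : Matrix S K ℝ} {π : S → A → ℝ} {u : S × A → ℝ}

theorem mem_Utilde_of_mem_Uset (hu : u ∈ Uset P α γ) (hle : ∀ w, u w ≤ π w.1 w.2) :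
    u ∈ Utilde P α γ Φ π := by
  refine ⟨hu.1, ?_, hle⟩
  rw [hu.2]
  exact mulVec_smul Φᵀ (1 - γ) α

theorem uOcc_mem_Utilde (hP : ∀ s a s', 0 ≤ P s a s') (hPsum : ∀ s a, ∑ s', P s a s' = 1)
    (hα : α ∈ stdSimplex ℝ S) (hγ0 : 0 ≤ γ) (hγ1 : γ < 1) (hπ : isPolicy π) :
    uOcc P α γ π ∈ Utilde P α γ Φ π :=
  mem_Utilde_of_mem_Uset (uOcc_mem_Uset hP hPsum hα hγ0 hγ1 hπ)
    (uOcc_le_policy (Pmat_mem_rowStochastic hP hPsum hπ) hα hγ0 hγ1 hπ.1)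

theorem isCompact_Utilde (P : S → A → S → ℝ) (α : S → ℝ) (γ : ℝ) (Φ : Matrix S K ℝ)
    (π : S → A → ℝ) : IsCompact (Utilde P α γ Φ π) := by
  have hclosed : IsClosed {u : S × A → ℝ |
      Φᵀ *ᵥ ((Amat P γ)ᵀ *ᵥ u) = fun j => (1 - γ) * (Φᵀ *ᵥ α) j} :=
    isClosed_eq (by fun_prop) continuous_const
  have hbox : IsCompact (Set.Icc (0 : S × A → ℝ) fun w => π w.1 w.2) := isCompact_Icc
  convert hbox.inter_right hclosed using 1
  ext u
  exact ⟨fun h => ⟨⟨h.1, h.2.2⟩, h.2.1⟩, fun h => ⟨h.1.1, h.2, h.1.2⟩⟩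

theorem dotProduct_Amat_mulVec_of_mem_Utilde [Fintype K] (hu : u ∈ Utilde P α γ Φ π)
    (x : K → ℝ) : u ⬝ᵥ (Amat P γ *ᵥ (Φ *ᵥ x)) = (1 - γ) * (α ⬝ᵥ (Φ *ᵥ x)) := by
  have hflow : Φᵀ *ᵥ ((Amat P γ)ᵀ *ᵥ u) = (1 - γ) • (Φᵀ *ᵥ α) := hu.2.1
  calc u ⬝ᵥ (Amat P γ *ᵥ (Φ *ᵥ x))
      = (Φᵀ *ᵥ ((Amat P γ)ᵀ *ᵥ u)) ⬝ᵥ x := by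
        simp only [dotProduct_mulVec, mulVec_transpose]
    _ = (1 - γ) * (α ⬝ᵥ (Φ *ᵥ x)) := by
        rw [hflow, smul_dotProduct, smul_eq_mul, mulVec_transpose, dotProduct_mulVec]

theorem sum_mul_residual_div_of_mem_Utilde [Fintype K] (r : S → A → ℝ) (hγ : γ ≠ 1)
    (hu : u ∈ Utilde P α γ Φ π) (x : K → ℝ) :
    (∑ w, u w * ((Amat P γ *ᵥ (Φ *ᵥ x)) w - bvec r w)) / (1 - γ) =
      ∑ s, α s * (Φ *ᵥ x) s - (∑ w, bvec r w * u w) / (1 - γ) := by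
  have hγ' : 1 - γ ≠ 0 := sub_ne_zero.2 hγ.symm
  change u ⬝ᵥ (Amat P γ *ᵥ (Φ *ᵥ x) - bvec r) / (1 - γ) =
    α ⬝ᵥ (Φ *ᵥ x) - bvec r ⬝ᵥ u / (1 - γ)
  rw [dotProduct_sub, dotProduct_Amat_mulVec_of_mem_Utilde hu, dotProduct_comm u, sub_div,
    mul_div_cancel_left₀ _ hγ']

end Utilde

end DRADP

theorem rhoTilde_eq_min_general {S A K : Type*} [Fintype S] [Fintype A] [Fintype K]
    [DecidableEq S] (P : S → A → S → ℝ) (r : S → A → ℝ) (α : S → ℝ) {γ : ℝ} (Φ : Matrix S K ℝ)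
    (π : S → A → ℝ) (hγ : γ ≠ 1) (hU : (Utilde P α γ Φ π).Nonempty) :
    IsLeast ((fun u : S × A → ℝ => (∑ w, bvec r w * u w) / (1 - γ)) '' Utilde P α γ Φ π)
      (rhoTilde P r α γ Φ π) := by
  have hcont : Continuous fun u : S × A → ℝ => (∑ w, bvec r w * u w) / (1 - γ) := by fun_prop
  obtain ⟨m, hm⟩ := ((isCompact_Utilde P α γ Φ π).image hcont).exists_isLeast (hU.image _)
  have hconst (x : K → ℝ) : ∑ s, α s * (Φ *ᵥ x) s - sSup ((fun u : S × A → ℝ =>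
      (∑ w, u w * ((Amat P γ *ᵥ (Φ *ᵥ x)) w - bvec r w)) / (1 - γ)) '' Utilde P α γ Φ π) = m := by
    rw [Set.image_congr fun u hu => sum_mul_residual_div_of_mem_Utilde r hγ hu x]
    exact sub_sSup_image_const_sub hm _
  have hrho : rhoTilde P r α γ Φ π = m := by simp only [rhoTilde, hconst, ciSup_const]
  rwa [hrho]

/-- `ρ̃(π) = min_{u ∈ Ũ(π)} bᵀu/(1−γ)`, the minimum being attained. -/
theorem rhoTilde_eq_min {S A K : Type*} [Fintype S] [Fintype A] [Fintype K] [DecidableEq S]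
    (P : S → A → S → ℝ) (r : S → A → ℝ) (α : S → ℝ) (γ : ℝ) (Φ : Matrix S K ℝ)
    (hP : ∀ s a s', 0 ≤ P s a s') (hPsum : ∀ s a, ∑ s', P s a s' = 1)
    (hα : ∀ s, 0 ≤ α s) (hαsum : ∑ s, α s = 1)
    (hγ0 : 0 ≤ γ) (hγ1 : γ < 1)
    (π : S → A → ℝ) (hπ : isPolicy π) :
    IsLeast ((fun u : S × A → ℝ => (∑ w, bvec r w * u w) / (1 - γ)) '' Utilde P α γ Φ π)
      (rhoTilde P r α γ Φ π) :=
  rhoTilde_eq_min_general P r α Φ π hγ1.ne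
    ⟨uOcc P α γ π, uOcc_mem_Utilde hP hPsum ⟨hα, hαsum⟩ hγ0 hγ1 hπ⟩
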